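/- Let 𝓘 be the dyadic interval set, Θ ⊆ ℝ^n a convex set, and ℓ_t : Θ → ℝ convex loss functions for t ≥ 1. For each I ∈ 𝓘 let (θ_t(I))_{t∈I} ⊆ Θ be given. Set η_I = min{1/2, 1/√|I|} and ACT(t) = {I ∈ 𝓘 : t ∈ I}. Define, for I = [q,s] ∈ 𝓘, the unnormalized weights w̃_t(I) = 0 for t < q, w̃_q(I) = 1, w̃_{t+1}(I) = w̃_t(I)(1 + η_I ρ_t r_t(I)) for q ≤ t ≤ s, and w̃_t(I) = w̃_{s+1}(I) for t > s+1; the active-learner weights w_t(I) = η_I w̃_t(I) for t ∈ I and 0 otherwise; the ensemble estimate θ̂_t = (Σ_{I∈ACT(t)} w_t(I) θ_t(I)) / (Σ_{I∈ACT(t)} w_t(I)); the estimated regret r_t(I) = ℓ_t(θ̂_t) − ℓ_t(θ_t(I)); and ρ_t = 1 / max_{I∈ACT(t)} |r_t(I)| (with ρ_t = 1 if the maximum is 0). Then for every integer t ≥ 1: Σ_{I∈𝓘} w̃_t(I) ≤ t(log₂ t + 1). -/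

import Mathlib

/-!
Between `t` and `t + 1` the weights of the intervals that have already started change in total by
`ρ_t ∑_{I ∈ ACT t} w_t(I) r_t(I)`. This is nonpositive: `ρ_t ≥ 0`, and Jensen's inequality at the
weighted average `θ̂_t` makes the weighted regrets sum to at most `0`. Jensen needs nonnegative
weights, which holds because each update factor is at least `1 - η_I |ρ_t r_t(I)| ≥ 0`. Every
interval enters with weight `1`, so the total weight never exceeds the number of intervals that
have started by time `t`; those have lengths `2 ^ j ≤ t` and multipliers `k ≤ t`, so there are at
most `t (⌊log₂ t⌋ + 1)` of them.
-/

open Finset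

/-- The dyadic interval indexed by `(j, k)` (with `k ≥ 1`):
the integer interval `[k·2^j, (k+1)·2^j − 1]`, which has `2^j` elements. -/
def dyadicI (j k : ℕ) : Finset ℕ := Finset.Icc (k * 2 ^ j) ((k + 1) * 2 ^ j - 1)

/-- `ACT t`: the (indices of the) dyadic intervals containing `t`.  Any dyadic
interval `(j, k)` containing `t ≥ 1` has `j ≤ log₂ t` and `1 ≤ k ≤ t`, so this
finite set is exactly `{I ∈ 𝓘 : t ∈ I}`. -/
def ACT (t : ℕ) : Finset (ℕ × ℕ) :=
  ((Finset.Iic (Nat.log 2 t)) ×ˢ (Finset.Icc 1 t)).filter fun p => t ∈ dyadicI p.1 p.2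

/-- The OCELAD learning rate of a dyadic interval of length `2^j`:
`η_I = min {1/2, 1/√|I|}`. -/
noncomputable def ηI (j : ℕ) : ℝ := min (1 / 2) (1 / Real.sqrt (2 ^ j))

/-- The indices of the dyadic intervals that have started by time `t`, i.e. whose left endpoint is
at most `t`. The box `j ≤ log₂ t`, `1 ≤ k ≤ t` contains all of them, see `mem_started`. -/
def started (t : ℕ) : Finset (ℕ × ℕ) :=
  ((Finset.Iic (Nat.log 2 t)) ×ˢ (Finset.Icc 1 t)).filter fun p => p.2 * 2 ^ p.1 ≤ t

section DyadicIntervals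

variable {t j k : ℕ}

lemma mem_dyadicI : t ∈ dyadicI j k ↔ k * 2 ^ j ≤ t ∧ t < (k + 1) * 2 ^ j := by
  have : 0 < (k + 1) * 2 ^ j := by positivity
  rw [dyadicI, mem_Icc]
  omega

lemma mem_started : (j, k) ∈ started t ↔ 1 ≤ k ∧ k * 2 ^ j ≤ t := by
  simp only [started, mem_filter, mem_product, mem_Iic, mem_Icc]
  refine ⟨fun ⟨⟨_, hk, _⟩, hle⟩ => ⟨hk, hle⟩, fun ⟨hk, hle⟩ => ⟨⟨?_, hk, ?_⟩, hle⟩⟩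
  · exact Nat.le_log_of_pow_le one_lt_two ((Nat.le_mul_of_pos_left _ hk).trans hle)
  · exact (Nat.le_mul_of_pos_right _ (by positivity)).trans hle

lemma started_mono : Monotone started := by
  rintro s t hst ⟨j, k⟩ h
  rw [mem_started] at h ⊢
  exact ⟨h.1, h.2.trans hst⟩

lemma mem_started_succ_sdiff_started :
    (j, k) ∈ started (t + 1) \ started t ↔ 1 ≤ k ∧ k * 2 ^ j = t + 1 := by
  rw [mem_sdiff, mem_started, mem_started]
  omega

lemma card_started_le (t : ℕ) : #(started t) ≤ t * (Nat.log 2 t + 1) :=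
  calc #(started t) ≤ #(Iic (Nat.log 2 t) ×ˢ Icc 1 t) := card_filter_le _ _
    _ = t * (Nat.log 2 t + 1) := by rw [card_product, Nat.card_Iic, Nat.card_Icc,
      Nat.add_sub_cancel, mul_comm]

lemma ACT_eq_filter_started (t : ℕ) :
    ACT t = (started t).filter fun p => t ∈ dyadicI p.1 p.2 := by
  ext p
  simp only [ACT, started, mem_filter, mem_dyadicI]
  tauto

lemma mem_ACT : (j, k) ∈ ACT t ↔ 1 ≤ k ∧ t ∈ dyadicI j k := by
  rw [ACT_eq_filter_started, mem_filter, mem_started, mem_dyadicI]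
  tauto

lemma singleton_mem_ACT (ht : 1 ≤ t) : (0, t) ∈ ACT t :=
  mem_ACT.2 ⟨ht, mem_dyadicI.2 (by simp)⟩

lemma one_le_of_mem_ACT {I : ℕ × ℕ} (hI : I ∈ ACT t) : 1 ≤ t := by
  have hk : I.2 ∈ Icc 1 t := (mem_product.1 (mem_filter.1 hI).1).2
  exact (mem_Icc.1 hk).1.trans (mem_Icc.1 hk).2

end DyadicIntervals

lemma ηI_pos (j : ℕ) : 0 < ηI j := by
  unfold ηI
  positivity

lemma ηI_le_one (j : ℕ) : ηI j ≤ 1 := (min_le_left _ _).trans (by norm_num)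

/-- The unnormalized weights `w̃` of dyadic intervals that are updated by the factors `1 + g I t`:
zero before the interval starts, `1` when it starts, and constant after it ends. In the paper
`g I t = η_I ρ_t r_t(I)`. -/
structure IsUnnormalizedWeight {R : Type*} [Semiring R] (wt g : ℕ × ℕ → ℕ → R) : Prop where
  eq_zero : ∀ j k, 1 ≤ k → ∀ t < k * 2 ^ j, wt (j, k) t = 0
  eq_one : ∀ j k, 1 ≤ k → wt (j, k) (k * 2 ^ j) = 1
  succ_of_mem : ∀ j k, 1 ≤ k → ∀ t ∈ dyadicI j k, wt (j, k) (t + 1) = wt (j, k) t * (1 + g (j, k) t)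
  eq_end : ∀ j k, 1 ≤ k → ∀ t, (k + 1) * 2 ^ j ≤ t → wt (j, k) t = wt (j, k) ((k + 1) * 2 ^ j)

namespace IsUnnormalizedWeight

section Semiring

variable {R : Type*} [Semiring R] {wt g : ℕ × ℕ → ℕ → R} {t j k : ℕ}

lemma succ_of_notMem (h : IsUnnormalizedWeight wt g) (hI : (j, k) ∈ started t)
    (ht : t ∉ dyadicI j k) : wt (j, k) (t + 1) = wt (j, k) t := by
  obtain ⟨hk, hstart⟩ := mem_started.1 hI
  have hend : (k + 1) * 2 ^ j ≤ t := by
    rw [mem_dyadicI] at ht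
    omega
  rw [h.eq_end j k hk (t + 1) (by omega), h.eq_end j k hk t hend]

lemma sum_started_succ (h : IsUnnormalizedWeight wt g) (t : ℕ) :
    ∑ I ∈ started t, wt I (t + 1) = ∑ I ∈ started t, wt I t + ∑ I ∈ ACT t, wt I t * g I t := by
  rw [ACT_eq_filter_started, sum_filter, ← sum_add_distrib]
  refine sum_congr rfl ?_
  rintro ⟨j, k⟩ hI
  split_ifs with ht
  · rw [h.succ_of_mem j k (mem_started.1 hI).1 t ht, mul_one_add]
  · rw [h.succ_of_notMem hI ht, add_zero]

lemma sum_starting (h : IsUnnormalizedWeight wt g) (t : ℕ) :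
    ∑ I ∈ started (t + 1) \ started t, wt I (t + 1) = #(started (t + 1) \ started t) := by
  rw [cast_card]
  refine sum_congr rfl ?_
  rintro ⟨j, k⟩ hI
  obtain ⟨hk, hstart⟩ := mem_started_succ_sdiff_started.1 hI
  rw [← hstart, h.eq_one j k hk]

lemma sum_started_le_card [PartialOrder R] [IsOrderedAddMonoid R] (h : IsUnnormalizedWeight wt g)
    (hdrift : ∀ t, ∑ I ∈ ACT t, wt I t * g I t ≤ 0) (t : ℕ) :
    ∑ I ∈ started t, wt I t ≤ #(started t) := by
  induction t with
  | zero => simp [started]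
  | succ t ih =>
    have hsub : started t ⊆ started (t + 1) := started_mono t.le_succ
    calc ∑ I ∈ started (t + 1), wt I (t + 1)
        = #(started (t + 1) \ started t)
            + (∑ I ∈ started t, wt I t + ∑ I ∈ ACT t, wt I t * g I t) := by
          rw [← sum_sdiff hsub, h.sum_starting, h.sum_started_succ]
      _ ≤ #(started (t + 1) \ started t) + #(started t) := by
          gcongr
          exact add_le_of_le_of_nonpos ih (hdrift t)
      _ = #(started (t + 1)) := by
          rw [← Nat.cast_add, card_sdiff_add_card_eq_card hsub]

end Semiring

section Ring

variable {R : Type*} [Ring R] [PartialOrder R] {wt g : ℕ × ℕ → ℕ → R}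

lemma nonneg [IsOrderedRing R] (h : IsUnnormalizedWeight wt g)
    (hg : ∀ t, ∀ I ∈ ACT t, -1 ≤ g I t) {j k : ℕ} (hk : 1 ≤ k) (t : ℕ) : 0 ≤ wt (j, k) t := by
  obtain hlt | hle := lt_or_ge t (k * 2 ^ j)
  · exact (h.eq_zero j k hk t hlt).ge
  induction t, hle using Nat.le_induction with
  | base => exact (h.eq_one j k hk).symm ▸ zero_le_one
  | succ t hle ih =>
    by_cases ht : t ∈ dyadicI j k
    · rw [h.succ_of_mem j k hk t ht]
      exact mul_nonneg ih (neg_le_iff_add_nonneg'.1 (hg t _ (mem_ACT.2 ⟨hk, ht⟩)))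
    · rw [h.succ_of_notMem (mem_started.2 ⟨hk, hle⟩) ht]
      exact ih

lemma sum_ACT_pos [IsStrictOrderedRing R] (h : IsUnnormalizedWeight wt g)
    (hg : ∀ t, ∀ I ∈ ACT t, -1 ≤ g I t) {η : ℕ × ℕ → R} (hη : ∀ I, 0 < η I) {t : ℕ} (ht : 1 ≤ t) :
    0 < ∑ I ∈ ACT t, η I * wt I t := by
  have hnonneg : ∀ I ∈ ACT t, 0 ≤ η I * wt I t := fun ⟨j, k⟩ hI =>
    mul_nonneg (hη _).le (h.nonneg hg (mem_ACT.1 hI).1 t)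
  have hone : wt (0, t) t = 1 := by simpa using h.eq_one 0 t ht
  refine sum_pos' hnonneg ⟨(0, t), singleton_mem_ACT ht, ?_⟩
  rw [hone, mul_one]
  exact hη _

end Ring

end IsUnnormalizedWeight

section LinearOrderedField

variable {𝕜 ι : Type*} [Field 𝕜] [LinearOrder 𝕜]

/-- `ρ` is the normalization `1 / max_{i ∈ s} |r i|`, read as `1` when the maximum is `0`. -/
def IsInvMaxAbs (s : Finset ι) (r : ι → 𝕜) (ρ : 𝕜) : Prop :=
  ((∀ i ∈ s, r i = 0) → ρ = 1) ∧
    ((∃ i ∈ s, r i ≠ 0) → ∃ i ∈ s, ρ = |r i|⁻¹ ∧ ∀ j ∈ s, |r j| ≤ |r i|)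

variable [IsStrictOrderedRing 𝕜] {s : Finset ι}

lemma IsInvMaxAbs.nonneg {r : ι → 𝕜} {ρ : 𝕜} (h : IsInvMaxAbs s r ρ) : 0 ≤ ρ := by
  by_cases hr : ∀ i ∈ s, r i = 0
  · exact h.1 hr ▸ zero_le_one
  · obtain ⟨i, -, rfl, -⟩ := h.2 (by simpa using hr)
    positivity

lemma IsInvMaxAbs.abs_mul_le_one {r : ι → 𝕜} {ρ : 𝕜} (h : IsInvMaxAbs s r ρ) {i : ι}
    (hi : i ∈ s) : |ρ * r i| ≤ 1 := by
  by_cases hr : ∀ i ∈ s, r i = 0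
  · simp [hr i hi]
  · obtain ⟨m, -, rfl, hmax⟩ := h.2 (by simpa using hr)
    rw [abs_mul, abs_inv, abs_abs, inv_mul_eq_div]
    exact div_le_one_of_le₀ (hmax i hi) (abs_nonneg _)

lemma IsInvMaxAbs.neg_one_le_mul {r : ι → 𝕜} {ρ η : 𝕜} (h : IsInvMaxAbs s r ρ) (hη₀ : 0 ≤ η)
    (hη₁ : η ≤ 1) {i : ι} (hi : i ∈ s) : -1 ≤ η * ρ * r i := by
  have habs : |η * ρ * r i| ≤ 1 := by
    rw [mul_assoc, abs_mul, abs_of_nonneg hη₀]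
    exact mul_le_one₀ hη₁ (abs_nonneg _) (h.abs_mul_le_one hi)
  exact (abs_le.1 habs).1

variable {E : Type*} [AddCommGroup E] [Module 𝕜 E] {Θ : Set E}

lemma sum_mul_map_centerMass_sub_nonpos {f : E → 𝕜} (hf : ConvexOn 𝕜 Θ f) {v : ι → 𝕜} {x : ι → E}
    (hv : ∀ i ∈ s, 0 ≤ v i) (hpos : 0 < ∑ i ∈ s, v i) (hx : ∀ i ∈ s, x i ∈ Θ) :
    ∑ i ∈ s, v i * (f (s.centerMass v x) - f (x i)) ≤ 0 := by
  have jensen : f (s.centerMass v x) ≤ (∑ i ∈ s, v i)⁻¹ * ∑ i ∈ s, v i * f (x i) :=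
    hf.map_centerMass_le hv hpos hx
  rw [inv_mul_eq_div, le_div_iff₀' hpos, sum_mul] at jensen
  simpa only [mul_sub, sum_sub_distrib, sub_nonpos] using jensen

theorem ocelad_total_weight_bound_general {ℓ : ℕ → E → 𝕜} {θL : ℕ × ℕ → ℕ → E} {η : ℕ × ℕ → 𝕜}
    {wt w r : ℕ × ℕ → ℕ → 𝕜} {θhat : ℕ → E} {ρ : ℕ → 𝕜}
    (hℓ : ∀ t, ConvexOn 𝕜 Θ (ℓ t)) (hθL : ∀ t, ∀ I ∈ ACT t, θL I t ∈ Θ)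
    (hη : ∀ I, 0 < η I)
    (hwt : IsUnnormalizedWeight wt fun I t => η I * ρ t * r I t)
    (hw : ∀ t, ∀ I ∈ ACT t, w I t = η I * wt I t)
    (hθhat : ∀ t, 1 ≤ t → θhat t = (ACT t).centerMass (w · t) (θL · t))
    (hr : ∀ I t, r I t = ℓ t (θhat t) - ℓ t (θL I t))
    (hρ : ∀ t, 1 ≤ t → 0 ≤ ρ t) (hstep : ∀ t, ∀ I ∈ ACT t, -1 ≤ η I * ρ t * r I t) (t : ℕ) :
    ∑ I ∈ started t, wt I t ≤ t * (Nat.log 2 t + 1) := by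
  have hw_nonneg : ∀ t, ∀ I ∈ ACT t, 0 ≤ w I t := fun t ⟨j, k⟩ hI =>
    hw t _ hI ▸ mul_nonneg (hη _).le (hwt.nonneg hstep (mem_ACT.1 hI).1 t)
  have hw_pos : ∀ t, 1 ≤ t → 0 < ∑ I ∈ ACT t, w I t := fun t ht =>
    sum_congr rfl (hw t) ▸ hwt.sum_ACT_pos hstep hη ht
  have hregret : ∀ t, 1 ≤ t → ∑ I ∈ ACT t, w I t * r I t ≤ 0 := fun t ht => by
    simpa only [hr, hθhat t ht] using
      sum_mul_map_centerMass_sub_nonpos (hℓ t) (hw_nonneg t) (hw_pos t ht) (hθL t)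
  have hdrift : ∀ t, ∑ I ∈ ACT t, wt I t * (η I * ρ t * r I t) ≤ 0 := fun t => by
    obtain rfl | ht := t.eq_zero_or_pos
    · simp [ACT]
    calc ∑ I ∈ ACT t, wt I t * (η I * ρ t * r I t) = ρ t * ∑ I ∈ ACT t, w I t * r I t := by
          rw [mul_sum]
          exact sum_congr rfl fun I hI => by rw [hw t I hI]; ring
      _ ≤ 0 := mul_nonpos_of_nonneg_of_nonpos (hρ t ht) (hregret t ht)
  exact (hwt.sum_started_le_card hdrift t).trans (mod_cast card_started_le t)

end LinearOrderedField

/-- **Lemma 1.**  Under the OCELAD weight construction with unnormalized weights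
`w̃_t(I)` (zero before the interval `I = [q,s]` starts, equal to `1` at `t = q`,
multiplicatively updated by `1 + η_I ρ_t r_t(I)` on `I`, and frozen after
`t = s+1`), the total unnormalized weight satisfies
`∑_{I∈𝓘} w̃_t(I) ≤ t(log₂ t + 1)` for every `t ≥ 1`.  The sum below ranges over
all dyadic intervals `(j, k)` whose left endpoint `k·2^j` is at most `t`; every
other dyadic interval has `w̃_t(I) = 0`, so this is the full sum over `𝓘`. -/
theorem ocelad_total_weight_bound
    (n : ℕ) (hn : 1 ≤ n)
    (Θ : Set (EuclideanSpace ℝ (Fin n))) (hΘ : Convex ℝ Θ)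
    (ℓ : ℕ → EuclideanSpace ℝ (Fin n) → ℝ)
    (hℓconv : ∀ t, ConvexOn ℝ Θ (ℓ t))
    (θL : ℕ × ℕ → ℕ → EuclideanSpace ℝ (Fin n))
    (hθL : ∀ j k, 1 ≤ k → ∀ t ∈ dyadicI j k, θL (j, k) t ∈ Θ)
    (wt : ℕ × ℕ → ℕ → ℝ)    -- the unnormalized weights `w̃`
    (w : ℕ × ℕ → ℕ → ℝ)     -- the active-learner weights `w`
    (θhat : ℕ → EuclideanSpace ℝ (Fin n))
    (r : ℕ × ℕ → ℕ → ℝ) (ρ : ℕ → ℝ)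
    -- definition of `w̃`
    (hwt_zero : ∀ j k, 1 ≤ k → ∀ t < k * 2 ^ j, wt (j, k) t = 0)
    (hwt_init : ∀ j k, 1 ≤ k → wt (j, k) (k * 2 ^ j) = 1)
    (hwt_rec : ∀ j k, 1 ≤ k → ∀ t ∈ dyadicI j k,
      wt (j, k) (t + 1) = wt (j, k) t * (1 + ηI j * ρ t * r (j, k) t))
    (hwt_frozen : ∀ j k, 1 ≤ k → ∀ t, (k + 1) * 2 ^ j ≤ t →
      wt (j, k) t = wt (j, k) ((k + 1) * 2 ^ j))
    -- `w_t(I) = η_I w̃_t(I)` for `t ∈ I`, and `0` otherwise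
    (hw : ∀ j k, 1 ≤ k → ∀ t,
      w (j, k) t = if t ∈ dyadicI j k then ηI j * wt (j, k) t else 0)
    -- the ensemble estimate is the weighted average of the active learners
    (hθhat : ∀ t, 1 ≤ t →
      θhat t = (∑ I ∈ ACT t, w I t)⁻¹ • ∑ I ∈ ACT t, w I t • θL I t)
    -- the estimated regrets
    (hr : ∀ I t, r I t = ℓ t (θhat t) - ℓ t (θL I t))
    -- `ρ_t = 1 / max_{I ∈ ACT(t)} |r_t(I)|`, with `ρ_t = 1` if the max is `0`
    (hρ : ∀ t, 1 ≤ t →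
      ((∀ I ∈ ACT t, r I t = 0) → ρ t = 1) ∧
      ((∃ I ∈ ACT t, r I t ≠ 0) →
        ∃ I ∈ ACT t, ρ t = |r I t|⁻¹ ∧ ∀ J ∈ ACT t, |r J t| ≤ |r I t|)) :
    ∀ t : ℕ, 1 ≤ t →
      (∑ p ∈ ((Finset.Iic (Nat.log 2 t)) ×ˢ (Finset.Icc 1 t)).filter
          (fun p => p.2 * 2 ^ p.1 ≤ t), wt p t) ≤
        t * (Real.logb 2 t + 1) := by
  intro t _
  have hgeneral : ∑ p ∈ started t, wt p t ≤ t * (Nat.log 2 t + 1) :=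
    ocelad_total_weight_bound_general (η := fun I => ηI I.1) hℓconv
      (fun t ⟨j, k⟩ hI => hθL j k (mem_ACT.1 hI).1 t (mem_ACT.1 hI).2)
      (fun I => ηI_pos I.1) ⟨hwt_zero, hwt_init, hwt_rec, hwt_frozen⟩
      (fun t ⟨j, k⟩ hI => (hw j k (mem_ACT.1 hI).1 t).trans (if_pos (mem_ACT.1 hI).2))
      hθhat hr (fun t ht => IsInvMaxAbs.nonneg (hρ t ht))
      (fun t I hI => IsInvMaxAbs.neg_one_le_mul (hρ t (one_le_of_mem_ACT hI)) (ηI_pos I.1).le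
        (ηI_le_one I.1) hI) t
  refine hgeneral.trans ?_
  gcongr
  exact mod_cast Real.natLog_le_logb t 2
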